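/- arXiv:1108.4195 — 11 statements merged into one kernel-verified Lean document; each statement's English description precedes it below -/
import Mathlib

section
/- For a closed continuous map f : X → Y from a metrizable Baire space X to a topological space Y the following conditions are equivalent: (1) f is skeletal; (2) f is skeletal at some dense subset of X; (3) f is densely open; (4) f is open at some dense Gδ-subset of X. -/
open Set Topology

/-- A continuous map `f : X → Y` is *skeletal* if for every non-empty open `U ⊆ X` the
closure of `f(U)` has non-empty interior. -/
def Skeletal {X Y : Type*} [TopologicalSpace X] [TopologicalSpace Y] (f : X → Y) : Prop :=
  ∀ U : Set X, IsOpen U → U.Nonempty → (interior (closure (f '' U))).Nonempty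

/-- `f` is *skeletal at a point* `x` if for each neighborhood `U` of `x` the closure of
`f(U)` has non-empty interior. -/
def SkeletalAtPoint {X Y : Type*} [TopologicalSpace X] [TopologicalSpace Y]
    (f : X → Y) (x : X) : Prop :=
  ∀ U ∈ 𝓝 x, (interior (closure (f '' U))).Nonempty

/-- `f` is *open at a point* `x` if for each neighborhood `U` of `x` the image `f(U)` is a
neighborhood of `f x`. -/
def OpenAtPoint {X Y : Type*} [TopologicalSpace X] [TopologicalSpace Y]
    (f : X → Y) (x : X) : Prop :=
  ∀ U ∈ 𝓝 x, f '' U ∈ 𝓝 (f x)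

/-- If `f` is closed and skeletal, the image of every ball of a fixed radius is a neighborhood of
the image of its center, for all centers in some dense open set. -/
theorem Skeletal.dense_interior_image_ball_mem_nhds {X Y : Type*} [PseudoMetricSpace X]
    [TopologicalSpace Y] {f : X → Y} (hs : Skeletal f) (hf : Continuous f) (hcl : IsClosedMap f)
    {ε : ℝ} (hε : 0 < ε) :
    Dense (interior {x | f '' Metric.ball x ε ∈ 𝓝 (f x)}) := by
  rw [dense_iff_inter_open]
  rintro V hV ⟨x₀, hx₀⟩
  have hUo : IsOpen (V ∩ Metric.ball x₀ (ε / 3)) := hV.inter Metric.isOpen_ball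
  obtain ⟨y, hy⟩ := hs _ hUo ⟨x₀, hx₀, Metric.mem_ball_self (by positivity)⟩
  obtain ⟨_, hzW, x, hxU, rfl⟩ :=
    mem_closure_iff.1 (interior_subset hy) _ isOpen_interior hy
  refine ⟨x, hxU.1, mem_interior.2 ⟨_, ?_, hUo.inter (isOpen_interior.preimage hf), hxU, hzW⟩⟩
  rintro z ⟨hzU, hzW⟩
  refine Filter.mem_of_superset (mem_interior_iff_mem_nhds.1 hzW) ?_
  refine (hcl.closure_image_subset _).trans (image_mono fun w hw => ?_)
  have hw' : dist w x₀ ≤ ε / 3 :=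
    Metric.closure_ball_subset_closedBall (closure_mono inter_subset_right hw)
  have hz' : dist z x₀ < ε / 3 := hzU.2
  have := dist_triangle_right w z x₀
  rw [Metric.mem_ball]
  linarith

/-- A closed continuous skeletal map on a metrizable Baire space is open at some dense
`Gδ`-set. -/
theorem Skeletal.exists_dense_isGδ_openAtPoint {X Y : Type*} [TopologicalSpace X]
    [TopologicalSpace Y] [TopologicalSpace.MetrizableSpace X] [BaireSpace X] {f : X → Y}
    (hs : Skeletal f) (hf : Continuous f) (hcl : IsClosedMap f) :
    ∃ A : Set X, Dense A ∧ IsGδ A ∧ ∀ x ∈ A, OpenAtPoint f x := by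
  let _ := TopologicalSpace.metrizableSpaceMetric X
  refine ⟨⋂ n : ℕ, interior {x | f '' Metric.ball x (1 / ((n : ℝ) + 1)) ∈ 𝓝 (f x)},
    dense_iInter_of_isOpen (fun _ => isOpen_interior)
      fun n => hs.dense_interior_image_ball_mem_nhds hf hcl (by positivity),
    .iInter_of_isOpen fun _ => isOpen_interior, fun x hx U hU => ?_⟩
  obtain ⟨ε, hε, hεU⟩ := Metric.mem_nhds_iff.1 hU
  obtain ⟨n, hn⟩ := exists_nat_one_div_lt hε
  have hxn : x ∈ {x | f '' Metric.ball x (1 / ((n : ℝ) + 1)) ∈ 𝓝 (f x)} :=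
    interior_subset (mem_iInter.1 hx n)
  exact Filter.mem_of_superset hxn (image_mono ((Metric.ball_subset_ball hn.le).trans hεU))

/-- For a closed continuous map `f : X → Y` from a metrizable Baire space `X` the following
are equivalent: (1) `f` is skeletal; (2) `f` is skeletal at some dense subset of `X`;
(3) `f` is densely open; (4) `f` is open at some dense `Gδ`-subset of `X`. -/
theorem skeletal_tfae_of_closedMap {X Y : Type*} [TopologicalSpace X] [TopologicalSpace Y]
    [TopologicalSpace.MetrizableSpace X] [BaireSpace X]
    (f : X → Y) (hf : Continuous f) (hcl : IsClosedMap f) :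
    List.TFAE
      [Skeletal f,
       ∃ A : Set X, Dense A ∧ ∀ x ∈ A, SkeletalAtPoint f x,
       ∃ A : Set X, Dense A ∧ ∀ x ∈ A, OpenAtPoint f x,
       ∃ A : Set X, Dense A ∧ IsGδ A ∧ ∀ x ∈ A, OpenAtPoint f x] := by
  tfae_have 1 → 4 := fun hs => hs.exists_dense_isGδ_openAtPoint hf hcl
  tfae_have 4 → 3 := fun ⟨A, hA, _, h⟩ => ⟨A, hA, h⟩
  tfae_have 3 → 2 := fun ⟨A, hA, h⟩ => ⟨A, hA, fun x hx U hU =>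
    ⟨f x, mem_interior_iff_mem_nhds.2 (Filter.mem_of_superset (h x hx U hU) subset_closure)⟩⟩
  tfae_have 2 → 1 := fun ⟨A, hA, h⟩ U hU hne =>
    let ⟨x, hxU, hxA⟩ := hA.inter_open_nonempty U hU hne
    h x hxA U (hU.mem_nhds hxU)
  tfae_finish
end

section
/- Every densely open commutative square of continuous maps is skeletal, i.e., if a commutative square 𝒟 (with p_Y ∘ f̃ = f ∘ p_X) is open at each point of some dense subset of X, then 𝒟 is skeletal at every point of X. -/
open Set Topology

/-- A commutative square (with top map `g' : X' → Y'`, bottom map `g : X → Y` and vertical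
maps `qX : X' → X`, `qY : Y' → Y`) is *skeletal at a point* `x ∈ X` if for each neighborhood
`U` of `x` there is a non-empty open `V ⊆ Y` with `V ⊆ cl (g '' U)` and
`qY ⁻¹' V ⊆ cl (g' '' (qX ⁻¹' U))`. -/
def SquareSkeletalAt {X Y X' Y' : Type*} [TopologicalSpace X] [TopologicalSpace Y]
    [TopologicalSpace X'] [TopologicalSpace Y']
    (g' : X' → Y') (g : X → Y) (qX : X' → X) (qY : Y' → Y) (x : X) : Prop :=
  ∀ U ∈ 𝓝 x, ∃ V : Set Y, IsOpen V ∧ V.Nonempty ∧ V ⊆ closure (g '' U) ∧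
    qY ⁻¹' V ⊆ closure (g' '' (qX ⁻¹' U))

/-- A commutative square is *open at a point* `x ∈ X` if for each neighborhood `U` of `x`
the point `g x` has a neighborhood `V ⊆ Y` with `V ⊆ g '' U` and
`qY ⁻¹' V ⊆ g' '' (qX ⁻¹' U)`. -/
def SquareOpenAt {X Y X' Y' : Type*} [TopologicalSpace X] [TopologicalSpace Y]
    [TopologicalSpace X'] [TopologicalSpace Y']
    (g' : X' → Y') (g : X → Y) (qX : X' → X) (qY : Y' → Y) (x : X) : Prop :=
  ∀ U ∈ 𝓝 x, ∃ V : Set Y, V ∈ 𝓝 (g x) ∧ V ⊆ g '' U ∧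
    qY ⁻¹' V ⊆ g' '' (qX ⁻¹' U)

/-- Every densely open commutative square of continuous maps is skeletal: if a commutative
square `𝒟` (with `pY ∘ f̃ = f ∘ pX`) is open at each point of some dense subset of `X`, then
`𝒟` is skeletal at every point of `X`. -/
theorem squareSkeletal_of_denselyOpen
    {X Y Xt Yt : Type*} [TopologicalSpace X] [TopologicalSpace Y]
    [TopologicalSpace Xt] [TopologicalSpace Yt]
    (ft : Xt → Yt) (f : X → Y) (pX : Xt → X) (pY : Yt → Y)
    (hft : Continuous ft) (hf : Continuous f) (hpX : Continuous pX) (hpY : Continuous pY)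
    (hcomm : ∀ z : Xt, pY (ft z) = f (pX z))
    (hdo : ∃ A : Set X, Dense A ∧ ∀ x ∈ A, SquareOpenAt ft f pX pY x) :
    ∀ x : X, SquareSkeletalAt ft f pX pY x := by
  obtain ⟨A, hA, hopen⟩ := hdo
  intro x U hU
  obtain ⟨a, haU, haA⟩ :=
    hA.inter_open_nonempty (interior U) isOpen_interior ⟨x, mem_interior_iff_mem_nhds.2 hU⟩
  obtain ⟨V, hV, hVU, hVU'⟩ := hopen a haA (interior U) (isOpen_interior.mem_nhds haU)
  refine ⟨interior V, isOpen_interior, ⟨f a, mem_interior_iff_mem_nhds.2 hV⟩, ?_, ?_⟩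
  · exact (interior_subset.trans hVU).trans
      ((image_mono interior_subset).trans subset_closure)
  · exact ((preimage_mono interior_subset).trans hVU').trans
      ((image_mono (preimage_mono interior_subset)).trans subset_closure)
end

section
/- Let 𝒟 be a commutative square of continuous maps f̃ : X̃ → Ỹ, f : X → Y, p_X : X̃ → X, p_Y : Ỹ → Y with p_Y ∘ f̃ = f ∘ p_X, such that f̃ is a closed map, p_Y is surjective, and X is a metrizable Baire space. Then the following conditions are equivalent: (1) 𝒟 is skeletal; (2) 𝒟 is skeletal at some dense subset of X; (3) 𝒟 is densely open; (4) 𝒟 is open at some dense Gδ-subset of X. -/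
open Set Topology

section MetricApproximation

variable {X Y X' Y' : Type*} [PseudoMetricSpace X] [TopologicalSpace Y]
  {g' : X' → Y'} {g : X → Y} {qX : X' → X} {qY : Y' → Y} {ε : ℝ}

/-- The points `x` such that `g x` has an open neighborhood whose preimage under `qY` lies in the
image under `g'` of the preimage of a closed `ε`-ball with center at distance less than `ε`
from `x`. -/
def squareOpenUpTo (g' : X' → Y') (g : X → Y) (qX : X' → X) (qY : Y' → Y) (ε : ℝ) : Set X :=
  {x | ∃ c : X, ∃ V : Set Y, IsOpen V ∧ x ∈ Metric.ball c ε ∧ g x ∈ V ∧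
    qY ⁻¹' V ⊆ g' '' (qX ⁻¹' Metric.closedBall c ε)}

theorem isOpen_squareOpenUpTo (hg : Continuous g) :
    IsOpen (squareOpenUpTo g' g qX qY ε) := by
  rw [isOpen_iff_mem_nhds]
  rintro x ⟨c, V, hV, hx, hgx, hsub⟩
  filter_upwards [Metric.isOpen_ball.mem_nhds hx, (hV.preimage hg).mem_nhds hgx] with y hy hgy
  exact ⟨c, V, hV, hy, hgy, hsub⟩

theorem dense_squareOpenUpTo [TopologicalSpace X'] [TopologicalSpace Y'] (hqX : Continuous qX)
    (hclosed : IsClosedMap g') (hskel : ∀ x, SquareSkeletalAt g' g qX qY x) (hε : 0 < ε) :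
    Dense (squareOpenUpTo g' g qX qY ε) := by
  rw [Metric.dense_iff]
  intro c r hr
  obtain ⟨V, hV, ⟨v, hv⟩, hVg, hVg'⟩ :=
    hskel c _ (Metric.ball_mem_nhds c (lt_min hr hε))
  obtain ⟨_, hwV, w, hw, rfl⟩ := mem_closure_iff.1 (hVg hv) V hV hv
  refine ⟨w, Metric.ball_subset_ball (min_le_left _ _) hw, c, V, hV,
    Metric.ball_subset_ball (min_le_right _ _) hw, hwV, hVg'.trans ?_⟩
  refine closure_minimal (image_mono (preimage_mono ?_))
    (hclosed _ (Metric.isClosed_closedBall.preimage hqX))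
  exact Metric.ball_subset_closedBall.trans (Metric.closedBall_subset_closedBall (min_le_right _ _))

theorem squareOpenAt_of_forall_mem_squareOpenUpTo [TopologicalSpace X'] [TopologicalSpace Y']
    (hcomm : ∀ z, qY (g' z) = g (qX z)) (hsurj : Function.Surjective qY) {x : X}
    (hx : ∀ n : ℕ, x ∈ squareOpenUpTo g' g qX qY (1 / ((n : ℝ) + 1))) :
    SquareOpenAt g' g qX qY x := by
  intro U hU
  obtain ⟨δ, hδ, hδU⟩ := Metric.mem_nhds_iff.1 hU
  obtain ⟨n, hn⟩ := exists_nat_one_div_lt (half_pos hδ)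
  obtain ⟨c, V, hV, hxc, hgx, hsub⟩ := hx n
  have hball : Metric.closedBall c (1 / ((n : ℝ) + 1)) ⊆ U := by
    refine Subset.trans (fun y hy => ?_) hδU
    rw [Metric.mem_closedBall] at hy
    rw [Metric.mem_ball] at hxc ⊢
    linarith [dist_triangle_right y x c]
  have hsubU : qY ⁻¹' V ⊆ g' '' (qX ⁻¹' U) := hsub.trans (image_mono (preimage_mono hball))
  refine ⟨V, hV.mem_nhds hgx, fun y hy => ?_, hsubU⟩
  obtain ⟨y', rfl⟩ := hsurj y
  obtain ⟨z, hz, rfl⟩ := hsubU hy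
  exact ⟨qX z, hz, (hcomm z).symm⟩

end MetricApproximation

section Pointwise

variable {X Y X' Y' : Type*} [TopologicalSpace X] [TopologicalSpace Y]
  [TopologicalSpace X'] [TopologicalSpace Y']
  {g' : X' → Y'} {g : X → Y} {qX : X' → X} {qY : Y' → Y}

theorem SquareOpenAt.squareSkeletalAt {x : X} (h : SquareOpenAt g' g qX qY x) :
    SquareSkeletalAt g' g qX qY x := by
  intro U hU
  obtain ⟨V, hV, hVg, hVg'⟩ := h U hU
  exact ⟨interior V, isOpen_interior, ⟨g x, mem_interior_iff_mem_nhds.2 hV⟩,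
    interior_subset.trans (hVg.trans subset_closure),
    (preimage_mono interior_subset).trans (hVg'.trans subset_closure)⟩

theorem squareSkeletalAt_of_dense {A : Set X} (hA : Dense A)
    (h : ∀ x ∈ A, SquareSkeletalAt g' g qX qY x) (x : X) : SquareSkeletalAt g' g qX qY x := by
  intro U hU
  obtain ⟨a, haU, haA⟩ := hA.inter_open_nonempty _ isOpen_interior
    ⟨x, mem_interior_iff_mem_nhds.2 hU⟩
  exact h a haA U (mem_interior_iff_mem_nhds.1 haU)

end Pointwise

/-- For a commutative square `𝒟` of continuous maps `f̃ : X̃ → Ỹ`, `f : X → Y`,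
`pX : X̃ → X`, `pY : Ỹ → Y` with `pY ∘ f̃ = f ∘ pX`, such that `f̃` is a closed map, `pY` is
surjective and `X` is a metrizable Baire space, the following are equivalent:
(1) `𝒟` is skeletal; (2) `𝒟` is skeletal at some dense subset of `X`; (3) `𝒟` is densely
open; (4) `𝒟` is open at some dense `Gδ`-subset of `X`. -/
theorem squareSkeletal_tfae
    {X Y Xt Yt : Type*} [TopologicalSpace X] [TopologicalSpace Y]
    [TopologicalSpace Xt] [TopologicalSpace Yt]
    [TopologicalSpace.MetrizableSpace X] [BaireSpace X]
    (ft : Xt → Yt) (f : X → Y) (pX : Xt → X) (pY : Yt → Y)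
    (hft : Continuous ft) (hf : Continuous f) (hpX : Continuous pX) (hpY : Continuous pY)
    (hcomm : ∀ z : Xt, pY (ft z) = f (pX z))
    (hclosed : IsClosedMap ft) (hsurj : Function.Surjective pY) :
    List.TFAE
      [∀ x : X, SquareSkeletalAt ft f pX pY x,
       ∃ A : Set X, Dense A ∧ ∀ x ∈ A, SquareSkeletalAt ft f pX pY x,
       ∃ A : Set X, Dense A ∧ ∀ x ∈ A, SquareOpenAt ft f pX pY x,
       ∃ A : Set X, Dense A ∧ IsGδ A ∧ ∀ x ∈ A, SquareOpenAt ft f pX pY x] := by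
  tfae_have 4 → 3 := fun ⟨A, hA, _, h⟩ => ⟨A, hA, h⟩
  tfae_have 3 → 2 := fun ⟨A, hA, h⟩ => ⟨A, hA, fun x hx => (h x hx).squareSkeletalAt⟩
  tfae_have 2 → 1 := fun ⟨_, hA, h⟩ => squareSkeletalAt_of_dense hA h
  tfae_have 1 → 4 := by
    intro h
    let := TopologicalSpace.metrizableSpaceMetric X
    have hopen (n : ℕ) : IsOpen (squareOpenUpTo ft f pX pY (1 / ((n : ℝ) + 1))) :=
      isOpen_squareOpenUpTo hf
    exact ⟨⋂ n : ℕ, squareOpenUpTo ft f pX pY (1 / ((n : ℝ) + 1)),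
      dense_iInter_of_isOpen_nat hopen fun _ =>
        dense_squareOpenUpTo hpX hclosed h Nat.one_div_pos_of_nat,
      .iInter_of_isOpen hopen,
      fun x hx => squareOpenAt_of_forall_mem_squareOpenUpTo hcomm hsurj (mem_iInter.1 hx)⟩
  tfae_finish
end

section
/- Let 𝒟 be a skeletal commutative square of continuous maps f̃ : X̃ → Ỹ, f : X → Y, p_X : X̃ → X, p_Y : Ỹ → Y with p_Y ∘ f̃ = f ∘ p_X, such that f̃ is a closed map, p_Y is surjective, and X is a regular topological space. Then for each non-empty open subset U ⊆ X there is a non-empty open set V ⊆ Y such that V ⊆ f(U) and p_Y⁻¹(V) ⊆ f̃(p_X⁻¹(U)). -/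
open Set Topology

/-- If `𝒟` is a skeletal commutative square of continuous maps (with `pY ∘ f̃ = f ∘ pX`),
`f̃` is a closed map, `pY` is surjective and `X` is regular, then for every non-empty open
`U ⊆ X` there is a non-empty open `V ⊆ Y` with `V ⊆ f '' U` and
`pY ⁻¹' V ⊆ f̃ '' (pX ⁻¹' U)`. -/
theorem squareSkeletal_claim1
    {X Y Xt Yt : Type*} [TopologicalSpace X] [TopologicalSpace Y]
    [TopologicalSpace Xt] [TopologicalSpace Yt] [RegularSpace X]
    (ft : Xt → Yt) (f : X → Y) (pX : Xt → X) (pY : Yt → Y)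
    (hft : Continuous ft) (hf : Continuous f) (hpX : Continuous pX) (hpY : Continuous pY)
    (hcomm : ∀ z : Xt, pY (ft z) = f (pX z))
    (hclosed : IsClosedMap ft) (hsurj : Function.Surjective pY)
    (hsk : ∀ x : X, SquareSkeletalAt ft f pX pY x) :
    ∀ U : Set X, IsOpen U → U.Nonempty →
      ∃ V : Set Y, IsOpen V ∧ V.Nonempty ∧ V ⊆ f '' U ∧ pY ⁻¹' V ⊆ ft '' (pX ⁻¹' U) := by
  rintro U hU ⟨x, hx⟩
  obtain ⟨K, hK, hKclosed, hKU⟩ := exists_mem_nhds_isClosed_subset (hU.mem_nhds hx)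
  obtain ⟨V, hV, hVne, -, hVsub⟩ := hsk x K hK
  have hlift : pY ⁻¹' V ⊆ ft '' (pX ⁻¹' U) := by
    rw [(hclosed _ (hKclosed.preimage hpX)).closure_eq] at hVsub
    exact hVsub.trans (image_mono (preimage_mono hKU))
  refine ⟨V, hV, hVne, fun y hy => ?_, hlift⟩
  obtain ⟨w, rfl⟩ := hsurj y
  obtain ⟨z, hz, rfl⟩ := hlift hy
  exact ⟨pX z, hz, (hcomm z).symm⟩
end

section
/- Let 𝒟 be a skeletal commutative square of continuous maps f̃ : X̃ → Ỹ, f : X → Y, p_X : X̃ → X, p_Y : Ỹ → Y with p_Y ∘ f̃ = f ∘ p_X, such that f̃ is a closed map, p_Y is surjective, and X is a regular topological space. Then each non-empty open set U ⊆ X contains a non-empty open set W ⊆ U such that f(W) is open in Y and f̃(p_X⁻¹(W)) = p_Y⁻¹(f(W)). -/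
open Set Topology

/-- If `𝒟` is a skeletal commutative square of continuous maps (with `pY ∘ f̃ = f ∘ pX`),
`f̃` is a closed map, `pY` is surjective and `X` is regular, then each non-empty open
`U ⊆ X` contains a non-empty open `W ⊆ U` such that `f '' W` is open in `Y` and
`f̃ '' (pX ⁻¹' W) = pY ⁻¹' (f '' W)`. -/
theorem squareSkeletal_claim2
    {X Y Xt Yt : Type*} [TopologicalSpace X] [TopologicalSpace Y]
    [TopologicalSpace Xt] [TopologicalSpace Yt] [RegularSpace X]
    (ft : Xt → Yt) (f : X → Y) (pX : Xt → X) (pY : Yt → Y)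
    (hft : Continuous ft) (hf : Continuous f) (hpX : Continuous pX) (hpY : Continuous pY)
    (hcomm : ∀ z : Xt, pY (ft z) = f (pX z))
    (hclosed : IsClosedMap ft) (hsurj : Function.Surjective pY)
    (hsk : ∀ x : X, SquareSkeletalAt ft f pX pY x) :
    ∀ U : Set X, IsOpen U → U.Nonempty →
      ∃ W : Set X, IsOpen W ∧ W.Nonempty ∧ W ⊆ U ∧ IsOpen (f '' W) ∧
        ft '' (pX ⁻¹' W) = pY ⁻¹' (f '' W) := by
  rintro U hU ⟨x, hx⟩
  obtain ⟨C, hC, hCclosed, hCU⟩ := exists_mem_nhds_isClosed_subset (hU.mem_nhds hx)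
  obtain ⟨V, hV, hVne, -, hVC⟩ := hsk x C hC
  rw [(hclosed _ (hCclosed.preimage hpX)).closure_eq] at hVC
  have hfW : f '' (U ∩ f ⁻¹' V) = V := by
    refine Subset.antisymm (image_subset_iff.2 inter_subset_right) fun y hy => ?_
    obtain ⟨t, rfl⟩ := hsurj y
    obtain ⟨z, hz, rfl⟩ := hVC hy
    exact ⟨pX z, ⟨hCU hz, by simpa [hcomm] using hy⟩, (hcomm z).symm⟩
  refine ⟨U ∩ f ⁻¹' V, hU.inter (hV.preimage hf), ?_, inter_subset_left, ?_, ?_⟩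
  · rwa [← image_nonempty (f := f), hfW]
  · rwa [hfW]
  · rw [hfW]
    refine Subset.antisymm ?_ fun t ht => ?_
    · rintro _ ⟨z, hz, rfl⟩
      simpa [hcomm] using hz.2
    · obtain ⟨z, hz, rfl⟩ := hVC ht
      exact ⟨z, ⟨hCU hz, by simpa [hcomm] using ht⟩, rfl⟩
end

section
/- Let {f_α}_{α∈A} : 𝒮_X → 𝒮_Y be a morphism between inverse spectra 𝒮_X = {X_α, p_α^β, A} and 𝒮_Y = {Y_α, π_α^β, A} over the same directed set A, and suppose both spectra have surjective limit projections. If for every index α ∈ A the limit ↓α-square of the morphism is skeletal, then the limit map lim f_α : lim 𝒮_X → lim 𝒮_Y is skeletal. -/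
open Set Topology

universe u

/-- A commutative square (top map `g' : X' → Y'`, bottom map `g : X → Y`, vertical maps
`qX : X' → X`, `qY : Y' → Y`) is *skeletal* if for each point `x ∈ X` and each neighborhood
`U` of `x` there is a non-empty open `V ⊆ Y` with `V ⊆ cl (g '' U)` and
`qY ⁻¹' V ⊆ cl (g' '' (qX ⁻¹' U))`. -/
def SkeletalSquare {X Y X' Y' : Type*} [TopologicalSpace X] [TopologicalSpace Y]
    [TopologicalSpace X'] [TopologicalSpace Y']
    (g' : X' → Y') (g : X → Y) (qX : X' → X) (qY : Y' → Y) : Prop :=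
  ∀ x : X, ∀ U ∈ 𝓝 x, ∃ V : Set Y, IsOpen V ∧ V.Nonempty ∧ V ⊆ closure (g '' U) ∧
    qY ⁻¹' V ⊆ closure (g' '' (qX ⁻¹' U))

/-- An *inverse spectrum* over a partially ordered index set `A`: topological spaces `X a`
together with continuous bonding maps `bond h : X b → X a` for `h : a ≤ b`, satisfying the
usual identity and composition laws. -/
structure InvSpec (A : Type u) [PartialOrder A] : Type (u + 1) where
  X : A → Type u
  [topX : ∀ a, TopologicalSpace (X a)]
  bond : ∀ {a b : A}, a ≤ b → X b → X a
  bond_cont : ∀ {a b : A} (h : a ≤ b), Continuous (bond h)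
  bond_refl : ∀ (a : A) (x : X a), bond le_rfl x = x
  bond_comp : ∀ {a b c : A} (hab : a ≤ b) (hbc : b ≤ c) (x : X c),
    bond hab (bond hbc x) = bond (hab.trans hbc) x

attribute [instance] InvSpec.topX

variable {A : Type u} [PartialOrder A]

/-- The limit `lim 𝒮` of an inverse spectrum, as the set of threads in the product. -/
def InvSpec.limitSet (S : InvSpec A) : Set (∀ a, S.X a) :=
  {x | ∀ (a b : A) (h : a ≤ b), S.bond h (x b) = x a}

/-- The limit projection `p_a : lim 𝒮 → X a`. -/
def InvSpec.proj (S : InvSpec A) (a : A) : S.limitSet → S.X a := fun x => x.1 a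

/-- A *morphism* between two inverse spectra over the same index set: a family of continuous
maps `f a : X a → Y a` commuting with the bonding maps. -/
structure SpecMor (S T : InvSpec A) where
  maps : ∀ a, S.X a → T.X a
  maps_cont : ∀ a, Continuous (maps a)
  comm : ∀ {a b : A} (h : a ≤ b) (x : S.X b), maps a (S.bond h x) = T.bond h (maps b x)

/-- The limit map `lim f_a : lim 𝒮_X → lim 𝒮_Y` of a morphism of spectra. -/
def SpecMor.limMap {S T : InvSpec A} (F : SpecMor S T) : S.limitSet → T.limitSet :=
  fun x => ⟨fun a => F.maps a (x.1 a),
    fun a b h => by rw [← F.comm h (x.1 b), x.2 a b h]⟩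

/-- The *limit `↓a`-square* of a morphism (top map `lim f`, bottom map `f a`, verticals the
limit projections) is skeletal. -/
def LimitSquareSkeletal {S T : InvSpec A} (F : SpecMor S T) (a : A) : Prop :=
  SkeletalSquare F.limMap (F.maps a) (S.proj a) (T.proj a)

/-- The *bonding `↓_a^b`-square* of a morphism (top map `f b`, bottom map `f a`, verticals
the bonding maps) is skeletal. -/
def BondingSquareSkeletal {S T : InvSpec A} (F : SpecMor S T) {a b : A} (h : a ≤ b) : Prop :=
  SkeletalSquare (F.maps b) (F.maps a) (S.bond h) (T.bond h)

/-- A family of non-empty open sets is a *π-base* if every non-empty open set contains a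
member of the family. -/
def IsPiBase {Z : Type*} [TopologicalSpace Z] (B : Set (Set Z)) : Prop :=
  (∀ U ∈ B, IsOpen U ∧ U.Nonempty) ∧
  ∀ U : Set Z, IsOpen U → U.Nonempty → ∃ V ∈ B, V ⊆ U

/-- The *π-weight* of a space: the smallest cardinality of a π-base. -/
noncomputable def piWeight (Z : Type u) [TopologicalSpace Z] : Cardinal.{u} :=
  ⨅ B : {B : Set (Set Z) // IsPiBase B}, Cardinal.mk B.1

/-- A partially ordered set is *κ-directed* if every subset of cardinality `≤ κ` has an
upper bound. -/
def CardDirected (A : Type u) [PartialOrder A] (κ : Cardinal.{u}) : Prop :=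
  ∀ K : Set A, Cardinal.mk K ≤ κ → ∃ ub : A, ∀ k ∈ K, k ≤ ub

/-- A partially ordered set is *ω-complete* if every (non-empty) countable chain has a least
upper bound. -/
def OmegaComplete (A : Type u) [PartialOrder A] : Prop :=
  ∀ C : Set A, C.Countable → C.Nonempty → IsChain (· ≤ ·) C → ∃ b : A, IsLUB C b

/-- The limit of the restriction of a spectrum to a subset `C` of the index set. -/
def InvSpec.limitSetOn (S : InvSpec A) (C : Set A) : Set (∀ c : C, S.X c) :=
  {x | ∀ (c d : C) (h : (c : A) ≤ (d : A)), S.bond h (x d) = x c}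

/-- The canonical map `X g → lim {X a, a ∈ C}` when `g` is a least upper bound of `C`. -/
def InvSpec.toLimitOn (S : InvSpec A) {C : Set A} {g : A} (hg : IsLUB C g) :
    S.X g → S.limitSetOn C :=
  fun xg => ⟨fun c => S.bond (hg.1 c.2) xg, fun c d h => S.bond_comp h (hg.1 d.2) xg⟩

/-- A spectrum is *continuous* (τ-continuous) if for every non-empty directed subset `C` of
the index set having a least upper bound `g`, the canonical map `X g → lim {X a, a ∈ C}` is
a homeomorphism. -/
def InvSpec.IsContinuousSpectrum (S : InvSpec A) : Prop :=
  ∀ (C : Set A) (g : A), C.Nonempty → DirectedOn (· ≤ ·) C → ∀ hg : IsLUB C g,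
    IsHomeomorph (S.toLimitOn hg)

/-- A *πτ-spectrum*: all spaces have π-weight `≤ τ`, the index set is τ-directed and
ω-complete, and the spectrum is τ-continuous. -/
def IsPiTauSpectrum (τ : Cardinal.{u}) (S : InvSpec A) : Prop :=
  (∀ a : A, piWeight (S.X a) ≤ τ) ∧ CardDirected A τ ∧ OmegaComplete A ∧
    S.IsContinuousSpectrum

/-- A subset `C` of a directed poset is *cofinal* if every element of the poset is below
some element of `C`. -/
def IsCofinalSub {A : Type u} [PartialOrder A] (C : Set A) : Prop :=
  ∀ a : A, ∃ b ∈ C, a ≤ b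

/-- A subset `C` is *τ-closed* (equivalently ω-closed) if for each (non-empty) directed
subset `D ⊆ C` having a least upper bound in `A`, this least upper bound belongs to `C`. -/
def IsSupClosed {A : Type u} [PartialOrder A] (C : Set A) : Prop :=
  ∀ D ⊆ C, D.Nonempty → DirectedOn (· ≤ ·) D → ∀ g : A, IsLUB D g → g ∈ C

/-- The projection to any coordinate is continuous. -/
theorem InvSpec.continuous_proj (S : InvSpec A) (a : A) : Continuous (S.proj a) :=
  (continuous_apply a).comp continuous_subtype_val

/-- Over a directed index set, preimages of open sets under the limit projections form a
neighborhood base at every point of the limit. -/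
theorem InvSpec.exists_proj_preimage_subset [Nonempty A]
    (hdir : ∀ a b : A, ∃ c : A, a ≤ c ∧ b ≤ c) (S : InvSpec A)
    {U : Set S.limitSet} (hU : IsOpen U) {x : S.limitSet} (hx : x ∈ U) :
    ∃ (a : A) (V : Set (S.X a)), IsOpen V ∧ S.proj a x ∈ V ∧ S.proj a ⁻¹' V ⊆ U := by
  obtain ⟨W, hW, rfl⟩ := isOpen_induced_iff.mp hU
  obtain ⟨I, u, hu, hIW⟩ := isOpen_pi_iff.mp hW x.1 hx
  have : IsDirectedOrder A := ⟨hdir⟩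
  obtain ⟨a, ha⟩ := I.exists_le
  refine ⟨a, ⋂ i : I, S.bond (ha i i.2) ⁻¹' u i,
    isOpen_iInter_of_finite fun i => (hu i i.2).1.preimage (S.bond_cont _), ?_, ?_⟩
  · refine mem_iInter.mpr fun i => ?_
    change S.bond (ha i i.2) (x.1 a) ∈ u i
    rw [x.2 i a (ha i i.2)]
    exact (hu i i.2).2
  · intro y hy
    refine hIW fun i hi => ?_
    have hyi : S.bond (ha i hi) (y.1 a) ∈ u i := mem_iInter.mp hy ⟨i, hi⟩
    rwa [y.2 i a (ha i hi)] at hyi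

/-- If a morphism between inverse spectra over a directed index set, both having surjective
limit projections, has skeletal limit `↓a`-squares for all `a`, then its limit map is
skeletal. -/
theorem skeletal_limMap_of_limitSquares {A : Type u} [PartialOrder A] [Nonempty A]
    (hdir : ∀ a b : A, ∃ c : A, a ≤ c ∧ b ≤ c)
    (S T : InvSpec A) (F : SpecMor S T)
    (hS : ∀ a : A, Function.Surjective (S.proj a))
    (hT : ∀ a : A, Function.Surjective (T.proj a))
    (hsq : ∀ a : A, LimitSquareSkeletal F a) :
    Skeletal F.limMap := by
  intro U hU ⟨x, hx⟩
  obtain ⟨a, V, hV, hxV, hVU⟩ := S.exists_proj_preimage_subset hdir hU hx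
  obtain ⟨W, hW, ⟨w, hw⟩, -, hWV⟩ := hsq a (S.proj a x) V (hV.mem_nhds hxV)
  obtain ⟨y, rfl⟩ := hT a w
  exact ⟨y, interior_maximal (hWV.trans (closure_mono (image_mono hVU)))
    (hW.preimage (T.continuous_proj a)) hw⟩
end

section
/- Let {f_α}_{α∈A} : 𝒮_X → 𝒮_Y be a morphism between inverse spectra 𝒮_X = {X_α, p_α^β, A} and 𝒮_Y = {Y_α, π_α^β, A} with surjective limit projections. Let α ∈ A and let κ = πw(Y_α) be the π-weight of Y_α. If the index set A is κ-directed and for every β ≥ α in A the bonding ↓_α^β-square is skeletal, then the limit ↓α-square is skeletal. -/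
open Set Topology

universe u

variable {A : Type u} [PartialOrder A]

theorem exists_isPiBase_mk_eq_piWeight (Z : Type u) [TopologicalSpace Z] :
    ∃ B : Set (Set Z), IsPiBase B ∧ Cardinal.mk B = piWeight Z := by
  have : Nonempty {B : Set (Set Z) // IsPiBase B} :=
    ⟨⟨{U | IsOpen U ∧ U.Nonempty}, fun _ h => h, fun U ho hn => ⟨U, ⟨ho, hn⟩, Subset.rfl⟩⟩⟩
  obtain ⟨B, hB⟩ := ciInf_mem fun B : {B : Set (Set Z) // IsPiBase B} => Cardinal.mk B.1
  exact ⟨B.1, B.2, hB⟩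

/-- In a directed poset every finite set of indices has an upper bound above a given index. -/
theorem exists_ge_forall_mem_finset_le (hdir : ∀ a b : A, ∃ c : A, a ≤ c ∧ b ≤ c) (a : A)
    (I : Finset A) : ∃ b, a ≤ b ∧ ∀ i ∈ I, i ≤ b := by
  classical
  induction I using Finset.induction_on with
  | empty => exact ⟨a, le_rfl, by simp⟩
  | insert i I _ ih =>
    obtain ⟨b, hab, hb⟩ := ih
    obtain ⟨c, hbc, hic⟩ := hdir b i
    refine ⟨c, hab.trans hbc, fun j hj => ?_⟩
    rcases Finset.mem_insert.1 hj with rfl | hj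
    · exact hic
    · exact (hb j hj).trans hbc

/-- A thread belongs to the closure of the limit image of `(S.proj a) ⁻¹' U` as soon as all its
coordinates above `a` belong to the closures of the corresponding images. -/
theorem SpecMor.mem_closure_image_limMap {S T : InvSpec A} (F : SpecMor S T)
    (hdir : ∀ a b : A, ∃ c : A, a ≤ c ∧ b ≤ c)
    (hS : ∀ a : A, Function.Surjective (S.proj a)) {a : A} {U : Set (S.X a)} {y : T.limitSet}
    (hy : ∀ b, ∀ h : a ≤ b, y.1 b ∈ closure (F.maps b '' (S.bond h ⁻¹' U))) :
    y ∈ closure (F.limMap '' (S.proj a ⁻¹' U)) := by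
  rw [closure_subtype, mem_closure_iff]
  intro O hO hyO
  obtain ⟨I, W, hW, hWO⟩ := isOpen_pi_iff.1 hO _ hyO
  obtain ⟨b, hab, hb⟩ := exists_ge_forall_mem_finset_le hdir a I
  have hopen : IsOpen (⋂ i : I, T.bond (hb i i.2) ⁻¹' W i) :=
    isOpen_iInter_of_finite fun i => (hW i i.2).1.preimage (T.bond_cont _)
  obtain ⟨_, hz, x, hxU, rfl⟩ := mem_closure_iff.1 (hy b hab) _ hopen <| mem_iInter.2 fun i => by
    rw [mem_preimage, y.2]
    exact (hW i i.2).2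
  obtain ⟨x, rfl⟩ := hS b x
  refine ⟨(F.limMap x).1, hWO fun i hi => ?_, F.limMap x, ⟨x, ?_, rfl⟩, rfl⟩
  · have h := mem_iInter.1 hz ⟨i, hi⟩
    rw [mem_preimage, ← F.comm] at h
    simpa only [SpecMor.limMap, InvSpec.proj, x.2 i b (hb i hi)] using h
  · have h : S.bond hab (x.1 b) ∈ U := hxU
    rwa [x.2 a b hab] at h

/-- Membership in closures of images of `(S.bond _) ⁻¹' U` descends along bonding maps. -/
theorem SpecMor.bond_mem_closure_image {S T : InvSpec A} (F : SpecMor S T) {a b c : A}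
    (hab : a ≤ b) (hbc : b ≤ c) {U : Set (S.X a)} {y : T.X c}
    (hy : y ∈ closure (F.maps c '' (S.bond (hab.trans hbc) ⁻¹' U))) :
    T.bond hbc y ∈ closure (F.maps b '' (S.bond hab ⁻¹' U)) := by
  refine map_mem_closure (T.bond_cont hbc) hy ?_
  rintro _ ⟨x, hx, rfl⟩
  refine ⟨S.bond hbc x, ?_, F.comm hbc x⟩
  rwa [mem_preimage, S.bond_comp]

/-- Let `F` be a morphism between inverse spectra with surjective limit projections, let
`a` be an index and `κ = πw(Y a)` the π-weight of `Y a`.  If the index set is κ-directed and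
all bonding `↓_a^b`-squares (`b ≥ a`) are skeletal, then the limit `↓a`-square is
skeletal. -/
theorem limitSquareSkeletal_of_bondingSquares {A : Type u} [PartialOrder A] [Nonempty A]
    (hdir : ∀ a b : A, ∃ c : A, a ≤ c ∧ b ≤ c)
    (S T : InvSpec A) (F : SpecMor S T)
    (hS : ∀ a : A, Function.Surjective (S.proj a))
    (hT : ∀ a : A, Function.Surjective (T.proj a))
    (a : A) (hκ : CardDirected A (piWeight (T.X a)))
    (hsq : ∀ b : A, ∀ h : a ≤ b, BondingSquareSkeletal F h) :
    LimitSquareSkeletal F a := by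
  intro x U hU
  obtain ⟨B, hB, hcard⟩ := exists_isPiBase_mk_eq_piWeight (T.X a)
  by_contra! hbad
  have key : ∀ V : B, ∃ b, V.1 ⊆ closure (F.maps a '' U) → ∃ h : a ≤ b, ∃ y : T.limitSet,
      y.1 a ∈ V.1 ∧ y.1 b ∉ closure (F.maps b '' (S.bond h ⁻¹' U)) := by
    intro V
    by_cases hV : V.1 ⊆ closure (F.maps a '' U)
    · obtain ⟨y, hyV, hy⟩ := not_subset.1 (hbad V.1 (hB.1 V V.2).1 (hB.1 V V.2).2 hV)
      have h := mt (F.mem_closure_image_limMap hdir hS) hy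
      push Not at h
      obtain ⟨b, hab, hb⟩ := h
      exact ⟨b, fun _ => ⟨hab, y, hyV, hb⟩⟩
    · exact ⟨a, fun h => absurd h hV⟩
  choose b hb using key
  obtain ⟨c₀, hc₀⟩ := hκ (range b) (Cardinal.mk_range_le.trans hcard.le)
  obtain ⟨c, hac, hc⟩ := hdir a c₀
  obtain ⟨V', hV'o, hV'n, hV'U, hV'c⟩ := hsq c hac x U hU
  obtain ⟨V, hVB, hVV'⟩ := hB.2 V' hV'o hV'n
  obtain ⟨hab, y, hyV, hy⟩ := hb ⟨V, hVB⟩ (hVV'.trans hV'U)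
  have hbc : b ⟨V, hVB⟩ ≤ c := (hc₀ _ (mem_range_self _)).trans hc
  refine hy ?_
  rw [← y.2 _ c hbc]
  refine F.bond_mem_closure_image hab hbc (hV'c ?_)
  rw [mem_preimage, y.2]
  exact hVV' hyV
end

section
/- Let {f_α}_{α∈A} : 𝒮_X → 𝒮_Y be a morphism between inverse spectra 𝒮_X = {X_α, p_α^β, A} and 𝒮_Y = {Y_α, π_α^β, A} with surjective limit projections. If for the cardinal κ = sup{πw(Y_α) : α ∈ A} the index set A is κ-directed, and all bonding ↓_α^β-squares (α ≤ β in A) of the morphism are skeletal, then all limit ↓α-squares (α ∈ A) of the morphism are skeletal. -/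
open Set Topology

universe u

variable {A : Type u} [PartialOrder A]

/-- Over a directed index set, preimages of open sets under the limit projections form a
neighborhood base in the limit. -/
theorem InvSpec.exists_proj_preimage_subset_s10 [Nonempty A]
    (hdir : ∀ a b : A, ∃ c : A, a ≤ c ∧ b ≤ c) (T : InvSpec A)
    {y : T.limitSet} {O : Set T.limitSet} (hO : O ∈ 𝓝 y) :
    ∃ (b : A) (W : Set (T.X b)), IsOpen W ∧ y ∈ T.proj b ⁻¹' W ∧ T.proj b ⁻¹' W ⊆ O := by
  have : IsDirectedOrder A := ⟨hdir⟩
  obtain ⟨N, hN, hNO⟩ := mem_nhds_subtype _ _ _ |>.1 hO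
  rw [nhds_pi, Filter.mem_pi'] at hN
  obtain ⟨I, t, ht, htN⟩ := hN
  obtain ⟨b, hb⟩ := I.exists_le
  refine ⟨b, ⋂ i : I, T.bond (hb i i.2) ⁻¹' interior (t i),
    isOpen_iInter_of_finite fun i => isOpen_interior.preimage (T.bond_cont _), ?_, ?_⟩
  · refine mem_iInter.2 fun i => ?_
    rw [mem_preimage, InvSpec.proj, y.2 _ _ (hb i i.2)]
    exact mem_interior_iff_mem_nhds.2 (ht i)
  · intro z hz
    refine hNO (htN fun i hi => ?_)
    have hzi := mem_iInter.1 hz ⟨i, hi⟩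
    rw [mem_preimage, InvSpec.proj, z.2 _ _ (hb i hi)] at hzi
    exact interior_subset hzi

/-- Let `F` be a morphism between inverse spectra with surjective limit projections.  If the
index set is κ-directed for `κ = sup {πw(Y a) : a ∈ A}` and all bonding `↓_a^b`-squares of
`F` are skeletal, then all limit `↓a`-squares of `F` are skeletal. -/
theorem limitSquaresSkeletal_of_bondingSquares {A : Type u} [PartialOrder A] [Nonempty A]
    (hdir : ∀ a b : A, ∃ c : A, a ≤ c ∧ b ≤ c)
    (S T : InvSpec A) (F : SpecMor S T)
    (hS : ∀ a : A, Function.Surjective (S.proj a))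
    (hT : ∀ a : A, Function.Surjective (T.proj a))
    (hκ : CardDirected A (⨆ a : A, piWeight (T.X a)))
    (hsq : ∀ {a b : A} (h : a ≤ b), BondingSquareSkeletal F h) :
    ∀ a : A, LimitSquareSkeletal F a := by
  intro a x U hU
  by_contra! hbad
  obtain ⟨B, hB, hcard⟩ := exists_isPiBase_mk_eq_piWeight (T.X a)
  -- Each member `V` of the π-base inside `cl (f_a U)` is refuted at some index `b`.
  have hrefute : ∀ V : B, ∃ b : A, V.1 ⊆ closure (F.maps a '' U) →
      ∃ (W : Set (T.X b)) (y : T.limitSet), IsOpen W ∧ y.1 b ∈ W ∧ y.1 a ∈ V.1 ∧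
        ∀ z : S.limitSet, z.1 a ∈ U → F.maps b (z.1 b) ∉ W := by
    intro V
    by_cases hV : V.1 ⊆ closure (F.maps a '' U)
    · obtain ⟨y, hyV, hy⟩ :=
        not_subset.1 (hbad V.1 (hB.1 _ V.2).1 (hB.1 _ V.2).2 hV)
      obtain ⟨b, W, hW, hyW, hWsub⟩ :=
        T.exists_proj_preimage_subset_s10 hdir (isClosed_closure.isOpen_compl.mem_nhds hy)
      exact ⟨b, fun _ => ⟨W, y, hW, hyW, hyV, fun z hz hzW =>
        hWsub (show F.limMap z ∈ T.proj b ⁻¹' W from hzW)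
          (subset_closure (mem_image_of_mem _ hz))⟩⟩
    · exact ⟨a, fun h => absurd h hV⟩
  choose b hb using hrefute
  obtain ⟨d, hd⟩ := hκ (range b) (Cardinal.mk_range_le.trans
    (hcard.le.trans (le_ciSup (f := fun a => piWeight (T.X a)) Cardinal.bddAbove_of_small a)))
  obtain ⟨c, hdc, hac⟩ := hdir d a
  obtain ⟨V', hV'o, hV'ne, hV'cl, hV'pre⟩ := hsq hac x U hU
  obtain ⟨V, hVB, hVV'⟩ := hB.2 V' hV'o hV'ne
  have hbc : b ⟨V, hVB⟩ ≤ c := (hd _ (mem_range_self _)).trans hdc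
  obtain ⟨W, y, hW, hyW, hyV, hdisj⟩ := hb ⟨V, hVB⟩ (hVV'.trans hV'cl)
  have hyc : y.1 c ∈ closure (F.maps c '' (S.bond hac ⁻¹' U)) := by
    refine hV'pre ?_
    rw [mem_preimage, y.2 _ _ hac]
    exact hVV' hyV
  obtain ⟨_, hwW, w, hwU, rfl⟩ := mem_closure_iff.1 hyc _ (hW.preimage (T.bond_cont hbc))
    (by rwa [mem_preimage, y.2 _ _ hbc])
  obtain ⟨z, rfl⟩ := hS c w
  simp only [mem_preimage, InvSpec.proj, ← F.comm, z.2 _ _ hbc, z.2 _ _ hac] at hwW hwU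
  exact hdisj z hwU hwW
end

section
/- Let {f_α}_{α∈A} : 𝒮_X → 𝒮_Y be a morphism between two πτ-spectra 𝒮_X = {X_α, p_α^β, A} and 𝒮_Y = {Y_α, π_α^β, A} with surjective limit projections. If the limit map lim f_α : lim 𝒮_X → lim 𝒮_Y is skeletal, then there exists a cofinal τ-closed subset B ⊆ A such that for every α ∈ B the map f_α is skeletal and the limit ↓α-square is skeletal, and for all α ≤ β in B the bonding ↓_α^β-square is skeletal. -/
open Set Topology

universe u

variable {A : Type u} [PartialOrder A]

/-- Open sets of a limit over a directed family of indices are generated by preimages of open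
sets under the projections. -/
theorem InvSpec.exists_coord_subset_of_isOpen (S : InvSpec A) {ι : Type u} [Nonempty ι]
    {c : ι → A} (hc : Directed (· ≤ ·) c) {L : Set (∀ i, S.X (c i))}
    (hL : ∀ x ∈ L, ∀ (i j : ι) (h : c i ≤ c j), S.bond h (x j) = x i)
    {U : Set L} (hU : IsOpen U) {x : L} (hx : x ∈ U) :
    ∃ (i : ι) (W : Set (S.X (c i))), IsOpen W ∧ x.1 i ∈ W ∧ ∀ y : L, y.1 i ∈ W → y ∈ U := by
  obtain ⟨O, hO, rfl⟩ := isOpen_induced_iff.mp hU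
  obtain ⟨I, u, hu, hIu⟩ := isOpen_pi_iff.mp hO x.1 hx
  obtain ⟨k, hk⟩ := hc.finset_le I
  refine ⟨k, ⋂ i : I, S.bond (hk i i.2) ⁻¹' u i, ?_, ?_, ?_⟩
  · exact isOpen_iInter_of_finite fun i => (hu i i.2).1.preimage (S.bond_cont _)
  · refine mem_iInter.mpr fun i => ?_
    rw [mem_preimage, hL x.1 x.2 i k]
    exact (hu i i.2).2
  · intro y hy
    refine hIu fun i hi => ?_
    have := mem_iInter.mp hy ⟨i, hi⟩
    rwa [mem_preimage, hL y.1 y.2 i k] at this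

theorem InvSpec.bond_proj (S : InvSpec A) {a b : A} (h : a ≤ b) (x : S.limitSet) :
    S.bond h (S.proj b x) = S.proj a x :=
  x.2 a b h

theorem exists_isPiBase_mk_le_piWeight (Z : Type u) [TopologicalSpace Z] :
    ∃ B : Set (Set Z), IsPiBase B ∧ Cardinal.mk B ≤ piWeight Z := by
  have : Nonempty {B : Set (Set Z) // IsPiBase B} :=
    ⟨⟨{U | IsOpen U ∧ U.Nonempty}, fun _ h => h, fun U hU hne => ⟨U, ⟨hU, hne⟩, Subset.rfl⟩⟩⟩
  obtain ⟨B, hB⟩ := ciInf_mem fun B : {B : Set (Set Z) // IsPiBase B} => Cardinal.mk B.1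
  exact ⟨B.1, B.2, hB.le⟩

/-- The limit map is skeletal from level `a` to level `b`: for every non-empty open `U ⊆ X a`,
the closure of the image of the cylinder over `U` contains the cylinder over some non-empty open
subset of `Y b`. -/
def SpecMor.SkeletalFromTo {S T : InvSpec A} (F : SpecMor S T) (a b : A) : Prop :=
  ∀ U : Set (S.X a), IsOpen U → U.Nonempty → ∃ V : Set (T.X b), IsOpen V ∧ V.Nonempty ∧
    T.proj b ⁻¹' V ⊆ closure (F.limMap '' (S.proj a ⁻¹' U))

namespace SpecMor

variable {S T : InvSpec A} {F : SpecMor S T}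

theorem SkeletalFromTo.mono_right (hT : ∀ a : A, Function.Surjective (T.proj a)) {a b c : A}
    (hF : F.SkeletalFromTo a b) (hbc : b ≤ c) : F.SkeletalFromTo a c := by
  intro U hU hne
  obtain ⟨V, hV, ⟨v, hv⟩, hVU⟩ := hF U hU hne
  refine ⟨T.bond hbc ⁻¹' V, hV.preimage (T.bond_cont hbc), ?_, fun z hz => hVU ?_⟩
  · obtain ⟨z, rfl⟩ := hT b v
    exact ⟨T.proj c z, by rwa [mem_preimage, T.bond_proj]⟩
  · rwa [mem_preimage, mem_preimage, T.bond_proj] at hz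

/-- Skeletality from a level to itself passes to the least upper bound of a directed set of
levels. -/
theorem SkeletalFromTo.of_isLUB (hcont : S.IsContinuousSpectrum)
    (hT : ∀ a : A, Function.Surjective (T.proj a)) {D : Set A} {g : A} (hne : D.Nonempty)
    (hD : DirectedOn (· ≤ ·) D) (hg : IsLUB D g)
    (hF : ∀ d ∈ D, ∃ e ∈ D, F.SkeletalFromTo d e) : F.SkeletalFromTo g g := by
  rintro U hU ⟨x, hx⟩
  have hhom := hcont D g hne hD hg
  have : Nonempty D := hne.to_subtype
  obtain ⟨d, W, hW, hxW, hWU⟩ := S.exists_coord_subset_of_isOpen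
    (directedOn_iff_directed.mp hD) (fun y hy => hy) (hhom.isOpenMap U hU)
    (mem_image_of_mem (S.toLimitOn hg) hx)
  obtain ⟨e, he, hde⟩ := hF d d.2
  obtain ⟨V, hV, hVne, hVW⟩ := hde.mono_right hT (hg.1 he) W hW ⟨_, hxW⟩
  refine ⟨V, hV, hVne, hVW.trans (closure_mono (image_mono fun z hz => ?_))⟩
  have hz' : S.toLimitOn hg (S.proj g z) ∈ S.toLimitOn hg '' U :=
    hWU _ (by
      change S.bond (hg.1 d.2) (S.proj g z) ∈ W
      rwa [S.bond_proj])
  exact hhom.injective.mem_set_image.mp hz'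

theorem bond_preimage_subset_closure
    (hT : ∀ a : A, Function.Surjective (T.proj a)) {a b : A} (h : a ≤ b)
    {U : Set (S.X a)} {V : Set (T.X a)}
    (hVU : T.proj a ⁻¹' V ⊆ closure (F.limMap '' (S.proj a ⁻¹' U))) :
    T.bond h ⁻¹' V ⊆ closure (F.maps b '' (S.bond h ⁻¹' U)) := by
  intro y hy
  obtain ⟨z, rfl⟩ := hT b y
  rw [mem_preimage, T.bond_proj] at hy
  refine map_mem_closure (T.continuous_proj b) (hVU hy) ?_
  rintro _ ⟨x, hx, rfl⟩
  exact ⟨S.proj b x, by rwa [mem_preimage, S.bond_proj], rfl⟩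

theorem SkeletalFromTo.exists_subset_closure
    (hT : ∀ a : A, Function.Surjective (T.proj a)) {a : A} (hF : F.SkeletalFromTo a a)
    {x : S.X a} {U : Set (S.X a)} (hU : U ∈ 𝓝 x) :
    ∃ V : Set (T.X a), IsOpen V ∧ V.Nonempty ∧ V ⊆ closure (F.maps a '' U) ∧
      T.proj a ⁻¹' V ⊆ closure (F.limMap '' (S.proj a ⁻¹' U)) := by
  obtain ⟨V, hV, hne, hVU⟩ := hF (interior U) isOpen_interior ⟨x, mem_interior_iff_mem_nhds.mpr hU⟩
  have hVU' : T.proj a ⁻¹' V ⊆ closure (F.limMap '' (S.proj a ⁻¹' U)) :=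
    hVU.trans (closure_mono (image_mono (preimage_mono interior_subset)))
  refine ⟨V, hV, hne, ?_, hVU'⟩
  have h := bond_preimage_subset_closure hT le_rfl hVU'
  have hS' : (S.bond (le_refl a)) = id := funext (S.bond_refl a)
  have hT' : (T.bond (le_refl a)) = id := funext (T.bond_refl a)
  rwa [hS', hT', preimage_id, preimage_id] at h

theorem SkeletalFromTo.skeletal (hT : ∀ a : A, Function.Surjective (T.proj a)) {a : A}
    (hF : F.SkeletalFromTo a a) : Skeletal (F.maps a) := by
  rintro U hU ⟨x, hx⟩
  obtain ⟨V, hV, hne, hVU, -⟩ := hF.exists_subset_closure hT (hU.mem_nhds hx)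
  exact hne.mono (interior_maximal hVU hV)

theorem SkeletalFromTo.limitSquareSkeletal (hT : ∀ a : A, Function.Surjective (T.proj a)) {a : A}
    (hF : F.SkeletalFromTo a a) : LimitSquareSkeletal F a :=
  fun _ _ hU => hF.exists_subset_closure hT hU

theorem SkeletalFromTo.bondingSquareSkeletal (hT : ∀ a : A, Function.Surjective (T.proj a))
    {a b : A} (hF : F.SkeletalFromTo a a) (h : a ≤ b) : BondingSquareSkeletal F h := by
  intro x U hU
  obtain ⟨V, hV, hne, hVU, hVU'⟩ := hF.exists_subset_closure hT hU
  exact ⟨V, hV, hne, hVU, bond_preimage_subset_closure hT h hVU'⟩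

/-- If the limit map is skeletal, then every level `a` of π-weight at most `τ` lies below a level
`b` such that the limit map is skeletal from `a` to `b`. -/
theorem exists_skeletalFromTo_of_skeletal [Nonempty A] {τ : Cardinal.{u}}
    (hτ : Cardinal.aleph0 ≤ τ) (hA : CardDirected A τ)
    (hS : ∀ a : A, Function.Surjective (S.proj a))
    (hT : ∀ a : A, Function.Surjective (T.proj a)) (hsk : Skeletal F.limMap) {a : A}
    (ha : piWeight (S.X a) ≤ τ) : ∃ b, a ≤ b ∧ F.SkeletalFromTo a b := by
  have hdir : Directed (· ≤ ·) (id : A → A) := by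
    intro i j
    obtain ⟨k, hk⟩ := hA {i, j}
      ((Cardinal.lt_aleph0_iff_set_finite.mpr (Set.toFinite {i, j})).le.trans hτ)
    exact ⟨k, hk i (by simp), hk j (by simp)⟩
  obtain ⟨P, hP, hPa⟩ := exists_isPiBase_mk_le_piWeight (S.X a)
  have key : ∀ W : P, ∃ (b : A) (V : Set (T.X b)), IsOpen V ∧ V.Nonempty ∧
      T.proj b ⁻¹' V ⊆ closure (F.limMap '' (S.proj a ⁻¹' W)) := by
    intro W
    obtain ⟨hWo, hWne⟩ := hP.1 W W.2
    obtain ⟨y, hy⟩ := hsk (S.proj a ⁻¹' W) (hWo.preimage (S.continuous_proj a))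
      (hWne.preimage (hS a))
    obtain ⟨b, V, hV, hyV, hVU⟩ := T.exists_coord_subset_of_isOpen hdir
      (fun z hz => hz) isOpen_interior hy
    exact ⟨b, V, hV, ⟨_, hyV⟩, fun z hz => interior_subset (hVU z hz)⟩
  choose b V hV hVne hVW using key
  obtain ⟨c, hc⟩ := hA (insert a (range b)) <| Cardinal.mk_insert_le.trans <|
    Cardinal.add_le_of_le hτ (Cardinal.mk_range_le.trans (hPa.trans ha))
      (Cardinal.one_le_aleph0.trans hτ)
  refine ⟨c, hc a (mem_insert _ _), fun U hU hne => ?_⟩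
  obtain ⟨W, hW, hWU⟩ := hP.2 U hU hne
  obtain ⟨z, hz⟩ := (hVne ⟨W, hW⟩).preimage (hT _)
  have hbc : b ⟨W, hW⟩ ≤ c := hc _ (mem_insert_of_mem _ (mem_range_self _))
  refine ⟨T.bond hbc ⁻¹' V ⟨W, hW⟩, (hV _).preimage (T.bond_cont hbc), ⟨T.proj c z, ?_⟩, ?_⟩
  · rwa [mem_preimage, T.bond_proj]
  · intro y hy
    rw [mem_preimage, mem_preimage, T.bond_proj] at hy
    exact closure_mono (image_mono (preimage_mono hWU)) (hVW _ hy)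

/-- If every level `a` admits a level `b ≥ a` to which the limit map is skeletal from `a`, then the
levels at which it is skeletal to themselves are cofinal. -/
theorem isCofinalSub_skeletalFromTo_self (hA : OmegaComplete A) (hcont : S.IsContinuousSpectrum)
    (hT : ∀ a : A, Function.Surjective (T.proj a))
    (hF : ∀ a, ∃ b, a ≤ b ∧ F.SkeletalFromTo a b) :
    IsCofinalSub {a | F.SkeletalFromTo a a} := by
  intro a
  choose next hle hnext using hF
  let s : ℕ → A := fun n => next^[n] a
  have hs : ∀ n, s (n + 1) = next (s n) := fun n => Function.iterate_succ_apply' next n a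
  have hmono : Monotone s := monotone_nat_of_le_succ fun n => (hs n).symm ▸ hle _
  obtain ⟨g, hg⟩ := hA (range s) (countable_range s) (range_nonempty s) hmono.isChain_range
  refine ⟨g, ?_, hg.1 ⟨0, rfl⟩⟩
  refine SkeletalFromTo.of_isLUB hcont hT (range_nonempty s) hmono.isChain_range.directedOn hg ?_
  rintro _ ⟨n, rfl⟩
  exact ⟨s (n + 1), mem_range_self _, (hs n).symm ▸ hnext _⟩

end SpecMor

/-- If the limit map of a morphism between two πτ-spectra with surjective limit projections
is skeletal, then there is a cofinal τ-closed subset `B` of the index set such that the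
restricted morphism is skeletal and has skeletal limit and bonding squares. -/
theorem exists_cofinal_supClosed_of_skeletal_limMap {A : Type u} [PartialOrder A]
    [Nonempty A] (τ : Cardinal.{u}) (hτ : Cardinal.aleph0 ≤ τ)
    (S T : InvSpec A) (F : SpecMor S T)
    (hSτ : IsPiTauSpectrum τ S) (hTτ : IsPiTauSpectrum τ T)
    (hS : ∀ a : A, Function.Surjective (S.proj a))
    (hT : ∀ a : A, Function.Surjective (T.proj a))
    (hsk : Skeletal F.limMap) :
    ∃ B : Set A, IsCofinalSub B ∧ IsSupClosed B ∧
      (∀ a ∈ B, Skeletal (F.maps a)) ∧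
      (∀ a ∈ B, LimitSquareSkeletal F a) ∧
      (∀ a ∈ B, ∀ b ∈ B, ∀ h : a ≤ b, BondingSquareSkeletal F h) := by
  obtain ⟨hSw, hdir, hω, hcont⟩ := hSτ
  refine ⟨{a | F.SkeletalFromTo a a}, ?_, ?_, ?_, ?_, ?_⟩
  · exact SpecMor.isCofinalSub_skeletalFromTo_self hω hcont hT fun a =>
      SpecMor.exists_skeletalFromTo_of_skeletal hτ hdir hS hT hsk (hSw a)
  · exact fun D hDB hne hD g hg =>
      SpecMor.SkeletalFromTo.of_isLUB hcont hT hne hD hg fun d hd => ⟨d, hd, hDB hd⟩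
  · exact fun a ha => ha.skeletal hT
  · exact fun a ha => ha.limitSquareSkeletal hT
  · exact fun a ha b _ h => ha.bondingSquareSkeletal hT h
end

section
/- Let {f_α}_{α∈A} : 𝒮_X → 𝒮_Y be a morphism between two πτ-spectra 𝒮_X = {X_α, p_α^β, A} and 𝒮_Y = {Y_α, π_α^β, A} with surjective limit projections, and suppose the limit map lim f_α : lim 𝒮_X → lim 𝒮_Y is skeletal. Then the set B = {α ∈ A : the limit ↓α-square of the morphism is skeletal} is τ-closed in A: for each directed subset D ⊆ B that has a least upper bound sup D in A, one has sup D ∈ B. -/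
open Set Topology

universe u

variable {A : Type u} [PartialOrder A]

/-- In a continuous spectrum, at a least upper bound `g` of a directed set `D`, the preimages of
neighborhoods under the bonding maps to `X d`, `d ∈ D`, form a neighborhood base. -/
theorem InvSpec.IsContinuousSpectrum.exists_bond_preimage_subset {A : Type u} [PartialOrder A]
    {S : InvSpec A} (hS : S.IsContinuousSpectrum) {D : Set A} {g : A} (hne : D.Nonempty)
    (hD : DirectedOn (· ≤ ·) D) (hg : IsLUB D g) {x : S.X g} {U : Set (S.X g)} (hU : U ∈ 𝓝 x) :
    ∃ d, ∃ hd : d ∈ D, ∃ W ∈ 𝓝 (S.bond (hg.1 hd) x), S.bond (hg.1 hd) ⁻¹' W ⊆ U := by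
  have : Nonempty D := hne.to_subtype
  have hind : IsInducing fun (y : S.X g) (d : D) => S.bond (hg.1 d.2) y :=
    IsInducing.subtypeVal.comp (hS D g hne hD hg).isInducing
  have hdir : Directed (· ≥ ·) fun d : D =>
      Filter.comap (S.bond (hg.1 d.2)) (𝓝 (S.bond (hg.1 d.2) x)) := by
    rintro ⟨a, ha⟩ ⟨b, hb⟩
    obtain ⟨c, hc, hac, hbc⟩ := hD a ha b hb
    have key : ∀ (e : A) (he : e ∈ D), e ≤ c →
        Filter.comap (S.bond (hg.1 hc)) (𝓝 (S.bond (hg.1 hc) x)) ≤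
          Filter.comap (S.bond (hg.1 he)) (𝓝 (S.bond (hg.1 he) x)) := by
      intro e he hec
      have hcomp : S.bond (hg.1 he) = S.bond hec ∘ S.bond (hg.1 hc) :=
        funext fun y => (S.bond_comp hec (hg.1 hc) y).symm
      rw [hcomp, ← Filter.comap_comap]
      exact Filter.comap_mono ((S.bond_cont hec).tendsto _).le_comap
    exact ⟨⟨c, hc⟩, key a ha hac, key b hb hbc⟩
  rw [hind.nhds_eq_comap, nhds_pi, Filter.pi, Filter.comap_iInf] at hU
  simp only [Filter.comap_comap] at hU
  obtain ⟨⟨d, hd⟩, W, hW, hWU⟩ := (Filter.mem_iInf_of_directed hdir U).1 hU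
  exact ⟨d, hd, W, hW, hWU⟩

/-- If the limit map of a morphism between two πτ-spectra with surjective limit projections
is skeletal, then the set `B = {a : the limit ↓a-square is skeletal}` is τ-closed in the
index set: the least upper bound of any (non-empty) directed subset of `B` that has a least
upper bound belongs to `B`. -/
theorem supClosed_limitSquareSkeletal {A : Type u} [PartialOrder A] [Nonempty A]
    (τ : Cardinal.{u}) (hτ : Cardinal.aleph0 ≤ τ) (S T : InvSpec A) (F : SpecMor S T)
    (hSτ : IsPiTauSpectrum τ S) (hTτ : IsPiTauSpectrum τ T)
    (hS : ∀ a : A, Function.Surjective (S.proj a))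
    (hT : ∀ a : A, Function.Surjective (T.proj a))
    (hsk : Skeletal F.limMap) :
    IsSupClosed {a : A | LimitSquareSkeletal F a} := by
  intro D hDB hne hD g hg x U hU
  obtain ⟨d, hd, W, hW, hWU⟩ := hSτ.2.2.2.exists_bond_preimage_subset hne hD hg hU
  obtain ⟨V, hVo, ⟨v, hv⟩, -, hVW⟩ := hDB hd _ W hW
  have hlim : T.proj g ⁻¹' (T.bond (hg.1 hd) ⁻¹' V) ⊆ closure (F.limMap '' (S.proj g ⁻¹' U)) := by
    intro y hy
    have hyV : T.proj d y ∈ V := by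
      rw [InvSpec.proj, ← y.2 d g (hg.1 hd)]
      exact hy
    have hsub : S.proj d ⁻¹' W ⊆ S.proj g ⁻¹' U := by
      intro z hz
      rw [mem_preimage, InvSpec.proj, ← z.2 d g (hg.1 hd)] at hz
      exact hWU hz
    exact closure_mono (image_mono hsub) (hVW hyV)
  refine ⟨T.bond (hg.1 hd) ⁻¹' V, hVo.preimage (T.bond_cont _), ?_, ?_, hlim⟩
  · obtain ⟨y, rfl⟩ := hT d v
    refine ⟨T.proj g y, ?_⟩
    rw [InvSpec.proj, ← y.2 d g (hg.1 hd)] at hv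
    exact hv
  · intro w hw
    obtain ⟨y, rfl⟩ := hT g w
    have hproj : Continuous (T.proj g) := (continuous_apply g).comp continuous_subtype_val
    refine map_mem_closure hproj (hlim hw) ?_
    rintro _ ⟨z, hz, rfl⟩
    exact ⟨S.proj g z, hz, rfl⟩
end

section
/- Let {f_α}_{α∈A} : 𝒮_X → 𝒮_Y be a morphism between two πτ-spectra 𝒮_X = {X_α, p_α^β, A} and 𝒮_Y = {Y_α, π_α^β, A} with surjective limit projections. If every map f_α, α ∈ A, is skeletal, then the limit map lim f_α : lim 𝒮_X → lim 𝒮_Y is skeletal. -/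
open Set Topology

universe u

variable {A : Type u} [PartialOrder A]

/-- The projections of a set of threads over a directed index set generate its topology. -/
theorem exists_isOpen_coord_subset {ι : Type*} [Preorder ι] [IsDirectedOrder ι] [Nonempty ι]
    {Z : ι → Type*} [∀ i, TopologicalSpace (Z i)] (bond : ∀ {i j : ι}, i ≤ j → Z j → Z i)
    (hbond : ∀ {i j : ι} (h : i ≤ j), Continuous (bond h)) {L : Set (∀ i, Z i)}
    (hL : ∀ z ∈ L, ∀ (i j : ι) (h : i ≤ j), bond h (z j) = z i)
    {G : Set L} (hG : IsOpen G) {y : L} (hy : y ∈ G) :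
    ∃ (i : ι) (O : Set (Z i)), IsOpen O ∧ y.1 i ∈ O ∧ ∀ z : L, z.1 i ∈ O → z ∈ G := by
  obtain ⟨s, hs, rfl⟩ := isOpen_induced_iff.mp hG
  obtain ⟨I, u, hu, hsub⟩ := isOpen_pi_iff.mp hs y.1 hy
  obtain ⟨i, hi⟩ := I.exists_le
  refine ⟨i, ⋂ j : I, bond (hi j j.2) ⁻¹' u j,
    isOpen_iInter_of_finite fun j => (hu j j.2).1.preimage (hbond _), ?_, fun z hz => ?_⟩
  · refine mem_iInter.mpr fun j => ?_
    rw [mem_preimage, hL y.1 y.2]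
    exact (hu j j.2).2
  · refine hsub fun j hj => ?_
    have := mem_iInter.mp hz ⟨j, hj⟩
    rwa [mem_preimage, hL z.1 z.2] at this

theorem InvSpec.bond_surjective (S : InvSpec A) (hS : ∀ a, Function.Surjective (S.proj a))
    {a b : A} (h : a ≤ b) : Function.Surjective (S.bond h) := fun x => by
  obtain ⟨z, rfl⟩ := hS a x
  exact ⟨z.1 b, z.2 a b h⟩

theorem CardDirected.isDirectedOrder {τ : Cardinal.{u}} (hτ : Cardinal.aleph0 ≤ τ)
    (hA : CardDirected A τ) : IsDirectedOrder A where
  directed a b := by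
    obtain ⟨c, hc⟩ := hA {a, b}
      ((Cardinal.lt_aleph0_of_finite ({a, b} : Set A)).le.trans hτ)
    exact ⟨c, hc a (by simp), hc b (by simp)⟩

/-- If a subset `D` of the limit is nowhere dense, then each index `a` lies below an index `b`
such that every non-empty open subset of `T.X a` is, at level `b`, refined by a non-empty open
set missing the projection of `D`. -/
theorem InvSpec.exists_ge_forall_isOpen_disjoint [Nonempty A] {τ : Cardinal.{u}}
    (hτ : Cardinal.aleph0 ≤ τ) (T : InvSpec A) (hA : CardDirected A τ)
    (hT : ∀ a, Function.Surjective (T.proj a)) {D : Set T.limitSet}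
    (hD : interior (closure D) = ∅) (a : A) (hw : piWeight (T.X a) ≤ τ) :
    ∃ (b : A) (hab : a ≤ b), ∀ O : Set (T.X a), IsOpen O → O.Nonempty →
      ∃ H : Set (T.X b), IsOpen H ∧ H.Nonempty ∧ H ⊆ T.bond hab ⁻¹' O ∧
        ∀ y ∈ D, T.proj b y ∉ H := by
  have := hA.isDirectedOrder hτ
  obtain ⟨B, hB, hcard⟩ := exists_isPiBase_mk_eq_piWeight (T.X a)
  have key : ∀ V : B, ∃ (b : A) (hab : a ≤ b) (H : Set (T.X b)), IsOpen H ∧ H.Nonempty ∧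
      H ⊆ T.bond hab ⁻¹' V ∧ ∀ y ∈ D, T.proj b y ∉ H := by
    intro V
    obtain ⟨hVo, v, hv⟩ := hB.1 V V.2
    obtain ⟨y₀, rfl⟩ := hT a v
    have hnot : ¬ T.proj a ⁻¹' V ⊆ closure D := fun hsub => by
      have : y₀ ∈ interior (closure D) :=
        interior_maximal hsub (hVo.preimage (T.continuous_proj a)) hv
      simp [hD] at this
    obtain ⟨y, hyV, hyD⟩ := not_subset.mp hnot
    obtain ⟨c, O, hO, hyO, hOsub⟩ := exists_isOpen_coord_subset T.bond T.bond_cont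
      (fun z hz => hz) isClosed_closure.isOpen_compl hyD
    obtain ⟨b, hab, hcb⟩ := exists_ge_ge a c
    refine ⟨b, hab, T.bond hab ⁻¹' V ∩ T.bond hcb ⁻¹' O,
      (hVo.preimage (T.bond_cont _)).inter (hO.preimage (T.bond_cont _)),
      ⟨y.1 b, ?_, ?_⟩, inter_subset_left, ?_⟩
    · rw [mem_preimage, y.2 a b hab]
      exact hyV
    · rwa [mem_preimage, y.2 c b hcb]
    · rintro z hz ⟨-, hzO⟩
      rw [mem_preimage, InvSpec.proj, z.2 c b hcb] at hzO
      exact hOsub z hzO (subset_closure hz)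
  choose b hab H hHo hHne hHV hHD using key
  obtain ⟨c₀, hc₀⟩ := hA (range b) (Cardinal.mk_range_le.trans (hcard.trans_le hw))
  obtain ⟨c, hac, hc₀c⟩ := exists_ge_ge a c₀
  have hbc (V : B) : b V ≤ c := (hc₀ _ (mem_range_self V)).trans hc₀c
  refine ⟨c, hac, fun O hO hne => ?_⟩
  obtain ⟨V, hV, hVO⟩ := hB.2 O hO hne
  refine ⟨T.bond (hbc ⟨V, hV⟩) ⁻¹' H ⟨V, hV⟩, (hHo _).preimage (T.bond_cont _),
    (hHne _).preimage (T.bond_surjective hT _), fun x hx => ?_, fun y hy hyH => ?_⟩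
  · rw [mem_preimage, ← T.bond_comp (hab ⟨V, hV⟩) (hbc ⟨V, hV⟩)]
    exact hVO (hHV _ hx)
  · rw [mem_preimage, InvSpec.proj, y.2 _ _ (hbc ⟨V, hV⟩)] at hyH
    exact hHD _ y hy hyH

/-- In a continuous spectrum, the space at the least upper bound of a directed set `C` of
indices has a base of preimages of open sets from levels in `C`. -/
theorem InvSpec.IsContinuousSpectrum.exists_isOpen_preimage_subset {T : InvSpec A}
    (hT : T.IsContinuousSpectrum) {C : Set A} {g : A} (hC : C.Nonempty)
    (hdir : DirectedOn (· ≤ ·) C) (hg : IsLUB C g) {W : Set (T.X g)} (hW : IsOpen W)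
    {w : T.X g} (hw : w ∈ W) :
    ∃ (c : C) (O : Set (T.X c)), IsOpen O ∧ T.bond (hg.1 c.2) w ∈ O ∧
      T.bond (hg.1 c.2) ⁻¹' O ⊆ W := by
  have : Nonempty C := hC.to_subtype
  have : IsDirectedOrder C := ⟨directedOn_iff_directed.mp hdir⟩
  have hhom := hT C g hC hdir hg
  obtain ⟨c, O, hO, hwO, hsub⟩ := exists_isOpen_coord_subset (ι := C) (Z := fun c => T.X c)
    (L := T.limitSetOn C) (fun h => T.bond h) (fun h => T.bond_cont h) (fun z hz => hz)
    (hhom.isOpenMap W hW) (mem_image_of_mem _ hw)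
  refine ⟨c, O, hO, hwO, fun x hx => ?_⟩
  exact (hhom.injective.mem_set_image).mp (hsub (T.toLimitOn hg x) hx)

/-- If every map `f_a` of a morphism between two πτ-spectra with surjective limit
projections is skeletal, then the limit map `lim f_a` is skeletal. -/
theorem skeletal_limMap_of_skeletal_maps {A : Type u} [PartialOrder A] [Nonempty A]
    (τ : Cardinal.{u}) (hτ : Cardinal.aleph0 ≤ τ) (S T : InvSpec A) (F : SpecMor S T)
    (hSτ : IsPiTauSpectrum τ S) (hTτ : IsPiTauSpectrum τ T)
    (hS : ∀ a : A, Function.Surjective (S.proj a))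
    (hT : ∀ a : A, Function.Surjective (T.proj a))
    (hsk : ∀ a : A, Skeletal (F.maps a)) :
    Skeletal F.limMap := by
  intro U hU ⟨x₀, hx₀⟩
  by_contra hempty
  rw [not_nonempty_iff_eq_empty] at hempty
  obtain ⟨hw, hA, hω, hcont⟩ := hTτ
  have := hA.isDirectedOrder hτ
  obtain ⟨a₀, U₀, hU₀, hx₀U₀, hsubU⟩ := exists_isOpen_coord_subset S.bond S.bond_cont
    (fun z hz => hz) hU hx₀
  choose φ hφ hstep using fun a =>
    T.exists_ge_forall_isOpen_disjoint hτ hA hT hempty a (hw a)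
  let s : ℕ → A := fun n => Nat.rec a₀ (fun _ => φ) n
  have hs : Monotone s := monotone_nat_of_le_succ fun n => hφ (s n)
  have hchain : IsChain (· ≤ ·) (range s) := hs.isChain_range
  obtain ⟨g, hg⟩ := hω (range s) (countable_range s) (range_nonempty s) hchain
  have hsg (n : ℕ) : s n ≤ g := hg.1 (mem_range_self n)
  obtain ⟨w, hwW⟩ := hsk g (S.bond (hsg 0) ⁻¹' U₀) (hU₀.preimage (S.bond_cont _))
    (Nonempty.preimage ⟨_, hx₀U₀⟩ (S.bond_surjective hS _))
  obtain ⟨⟨_, n, rfl⟩, O, hO, hwO, hOW⟩ := hcont.exists_isOpen_preimage_subset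
    (range_nonempty s) hchain.directedOn hg isOpen_interior hwW
  obtain ⟨H, hHo, hHne, hHO, hHU⟩ := hstep (s n) O hO ⟨_, hwO⟩
  obtain ⟨v, hv⟩ := hHne.preimage (T.bond_surjective hT (hsg (n + 1)))
  have hvW : v ∈ closure (F.maps g '' (S.bond (hsg 0) ⁻¹' U₀)) := by
    refine interior_subset (hOW ?_)
    have := hHO hv
    rwa [mem_preimage, T.bond_comp] at this
  obtain ⟨_, hyH, x, hx, rfl⟩ := mem_closure_iff.mp hvW _ (hHo.preimage (T.bond_cont _)) hv
  obtain ⟨z, rfl⟩ := hS g x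
  refine hHU (F.limMap z) (mem_image_of_mem _ (hsubU z ?_)) ?_
  · rw [mem_preimage, InvSpec.proj, z.2 _ _ (hsg 0)] at hx
    exact hx
  · have := (F.limMap z).2 _ _ (hsg (n + 1))
    rw [InvSpec.proj, ← this]
    exact hyH
end
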